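/- For every positive integer n, the limit as q → 1⁻ (q real, 0 < q < 1) of ((q; q²)_∞)^{n-1} (q²; q²)_∞ / (q^{2/n}; q^{2/n})_∞ equals 2^{(n-1)/2} / √n. -/

import Mathlib

/-- Infinite q-Pochhammer symbol `(a; q)_∞ = ∏_{i=0}^∞ (1 - a qⁱ)` (real version). -/
noncomputable def qPochR (a q : ℝ) : ℝ := ∏' i : ℕ, (1 - a * q ^ i)

/-!
With `φ(q) = (q; q)_∞`, splitting a product into its even and odd factors gives
`(q; q²)_∞ = φ(q) / φ(q²)`, so the quotient involves only the values of `φ` at `q`, `q²` and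
`q ^ (2 / n)`. The inversion formula for the Dedekind eta function on the imaginary axis gives
`φ(e⁻ᵗ) ~ √(2π / t) exp (-π² / (6t))` as `t → 0⁺`. On substituting this with `q = e⁻ᵗ`, the
exponentials cancel, since `-(n - 1) / 12 - 1 / 12 + n / 12 = 0`, and so do the powers of `t`.
-/

open Filter Topology Set Asymptotics

section QPochhammer

variable {q : ℝ}

lemma abs_pow_lt_one (hq : |q| < 1) {n : ℕ} (hn : n ≠ 0) : |q ^ n| < 1 := by
  simpa only [abs_pow] using pow_lt_one₀ (abs_nonneg q) hq hn

lemma summable_norm_mul_pow (a : ℝ) (hq : |q| < 1) : Summable fun i : ℕ => ‖-(a * q ^ i)‖ := by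
  simpa only [norm_neg] using ((summable_geometric_of_abs_lt_one hq).mul_left a).norm

lemma multipliable_one_sub_mul_pow (a : ℝ) (hq : |q| < 1) :
    Multipliable fun i : ℕ => 1 - a * q ^ i := by
  simpa only [sub_eq_add_neg] using multipliable_one_add_of_summable (summable_norm_mul_pow a hq)

lemma qPochR_ne_zero {a : ℝ} (hq : |q| < 1) (ha : ∀ i : ℕ, a * q ^ i ≠ 1) : qPochR a q ≠ 0 := by
  simp only [qPochR, sub_eq_add_neg]
  refine tprod_one_add_ne_zero_of_summable (fun i => ?_) (summable_norm_mul_pow a hq)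
  rw [← sub_eq_add_neg]
  exact sub_ne_zero.2 (ha i).symm

lemma qPochR_sq_mul_qPochR_mul_sq (a : ℝ) (hq : |q| < 1) :
    qPochR a (q ^ 2) * qPochR (a * q) (q ^ 2) = qPochR a q := by
  have hq2 : |q ^ 2| < 1 := abs_pow_lt_one hq two_ne_zero
  have heven (k : ℕ) : 1 - a * (q ^ 2) ^ k = 1 - a * q ^ (2 * k) := by rw [pow_mul]
  have hodd (k : ℕ) : 1 - a * q * (q ^ 2) ^ k = 1 - a * q ^ (2 * k + 1) := by ring
  have hmul_even := multipliable_one_sub_mul_pow a hq2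
  have hmul_odd := multipliable_one_sub_mul_pow (a * q) hq2
  simp only [qPochR, heven, hodd] at hmul_even hmul_odd ⊢
  exact tprod_even_mul_odd (f := fun k => 1 - a * q ^ k) hmul_even hmul_odd

end QPochhammer

/-- Euler's function `φ(q) = (q; q)_∞`, which is the Dedekind eta function without its factor
`q ^ (1 / 24)`. -/
noncomputable def eulerFunction (q : ℝ) : ℝ := qPochR q q

section EulerFunction

variable {q : ℝ}

lemma eulerFunction_ne_zero (hq : |q| < 1) : eulerFunction q ≠ 0 := by
  refine qPochR_ne_zero hq fun i hi => ?_
  have hlt : |q ^ (i + 1)| < 1 := abs_pow_lt_one hq i.succ_ne_zero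
  rw [pow_succ', hi, abs_one] at hlt
  exact hlt.false

lemma qPochR_sq_eq_eulerFunction_div (hq : |q| < 1) :
    qPochR q (q ^ 2) = eulerFunction q / eulerFunction (q ^ 2) := by
  rw [eq_div_iff (eulerFunction_ne_zero (abs_pow_lt_one hq two_ne_zero)), eulerFunction,
    eulerFunction, ← qPochR_sq_mul_qPochR_mul_sq q hq, ← sq]

lemma norm_tprod_one_sub_pow (hq₀ : 0 ≤ q) (hq : q < 1) :
    ‖∏' k : ℕ, (1 - (q : ℂ) ^ (k + 1))‖ = eulerFunction q := by
  have hnorm : ‖(q : ℂ)‖ < 1 := by rwa [Complex.norm_of_nonneg hq₀]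
  rw [(ModularForm.multipliable_one_sub_pow hnorm).norm_tprod, eulerFunction, qPochR]
  refine tprod_congr fun k => ?_
  rw [← pow_succ']
  norm_cast
  exact abs_of_nonneg (sub_nonneg.2 (pow_le_one₀ hq₀ hq.le))

lemma continuousOn_eulerFunction : ContinuousOn eulerFunction (Ico 0 1) := by
  have hmaps : MapsTo ((↑) : ℝ → ℂ) (Ico 0 1) (Metric.ball 0 1) := fun q hq => by
    rw [mem_ball_zero_iff, Complex.norm_of_nonneg hq.1]
    exact hq.2
  exact (ModularForm.differentiableOn_tprod_one_sub_pow.continuousOn.comp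
    Complex.continuous_ofReal.continuousOn hmaps).norm.congr
      fun q hq => (norm_tprod_one_sub_pow hq.1 hq.2).symm

lemma tendsto_eulerFunction_nhdsGE_zero : Tendsto eulerFunction (𝓝[≥] 0) (𝓝 1) := by
  have h := continuousOn_eulerFunction 0 (left_mem_Ico.2 one_pos)
  rw [ContinuousWithinAt, nhdsWithin_Ico_eq_nhdsGE one_pos] at h
  simpa [eulerFunction, qPochR] using h

end EulerFunction

open scoped Real in
/-- The leading term of Euler's function `φ(e⁻ᵗ)` as `t → 0⁺`. -/
noncomputable def eulerLeadingTerm (t : ℝ) : ℝ :=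
  √(2 * π / t) * Real.exp (-(π ^ 2 / (6 * t)))

section Inversion

open Complex (I)
open ModularForm (eta)
open Real (exp)
open scoped Real

variable {y t : ℝ}

lemma norm_eta_mul_I (hy : 0 < y) :
    ‖eta (y * I)‖ = exp (-(π * y / 12)) * eulerFunction (exp (-(2 * π * y))) := by
  have hnome : Complex.exp (2 * π * I * (y * I)) = (exp (-(2 * π * y)) : ℂ) := by
    push_cast
    congr 1
    linear_combination (2 * π * y : ℂ) * Complex.I_sq
  have hprefactor : ‖Function.Periodic.qParam 24 (y * I)‖ = exp (-(π * y / 12)) := by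
    rw [Function.Periodic.norm_qParam, Complex.im_ofReal_mul, Complex.I_im]
    ring_nf
  have hlt : exp (-(2 * π * y)) < 1 := Real.exp_lt_one_iff.2 (neg_lt_zero.2 (by positivity))
  simp only [eta, ModularForm.eta_q_eq_pow, hnome]
  rw [norm_mul, hprefactor, norm_tprod_one_sub_pow (Real.exp_pos _).le hlt]

lemma norm_complex_sqrt (z : ℂ) : ‖z.sqrt‖ = √‖z‖ := by
  have h := Complex.norm_cpow_real z 2⁻¹
  rw [Real.sqrt_eq_rpow, one_div, ← h, Complex.sqrt]
  push_cast
  rfl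

lemma norm_eta_inv_mul_I (hy : 0 < y) : ‖eta ((y⁻¹ : ℝ) * I)‖ = √y * ‖eta (y * I)‖ := by
  have hinv : (-1 / (y * I) : ℂ) = (y⁻¹ : ℝ) * I := by
    rw [div_mul_eq_div_div, Complex.div_I]
    push_cast
    ring
  have hmem : (y * I : ℂ) ∈ UpperHalfPlane.upperHalfPlaneSet := by
    simpa [UpperHalfPlane.upperHalfPlaneSet] using hy
  have h := congrArg norm (ModularForm.eta_comp_eq_csqrt_I_inv hmem)
  simpa only [Function.comp_apply, hinv, Pi.smul_apply, Pi.mul_apply, smul_eq_mul, norm_mul,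
    norm_inv, norm_complex_sqrt, Complex.norm_I, Real.sqrt_one, inv_one, one_mul, mul_one,
    Complex.norm_of_nonneg hy.le] using h

lemma eulerFunction_exp_neg_inversion (ht : 0 < t) :
    eulerFunction (exp (-t)) =
      exp (t / 24) * eulerFunction (exp (-(4 * π ^ 2 / t))) * eulerLeadingTerm t := by
  have hy : 0 < t / (2 * π) := by positivity
  have h := norm_eta_inv_mul_I hy
  rw [norm_eta_mul_I hy, norm_eta_mul_I (inv_pos.2 hy), inv_div,
    show π * (2 * π / t) / 12 = π ^ 2 / (6 * t) by field_simp; norm_num,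
    show 2 * π * (2 * π / t) = 4 * π ^ 2 / t by ring,
    show π * (t / (2 * π)) / 12 = t / 24 by field_simp; norm_num,
    show 2 * π * (t / (2 * π)) = t by field_simp] at h
  have hsqrt : √(2 * π / t) * √(t / (2 * π)) = 1 := by
    rw [← Real.sqrt_mul (by positivity), div_mul_div_cancel₀ ht.ne', div_self (by positivity),
      Real.sqrt_one]
  have hexp : exp (t / 24) * exp (-(t / 24)) = 1 := by
    rw [← Real.exp_add, add_neg_cancel, Real.exp_zero]
  calc eulerFunction (exp (-t))
      = (√(2 * π / t) * √(t / (2 * π))) * (exp (t / 24) * exp (-(t / 24))) *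
          eulerFunction (exp (-t)) := by rw [hsqrt, hexp, one_mul, one_mul]
    _ = exp (t / 24) * √(2 * π / t) *
          (√(t / (2 * π)) * (exp (-(t / 24)) * eulerFunction (exp (-t)))) := by ring
    _ = exp (t / 24) * eulerFunction (exp (-(4 * π ^ 2 / t))) * eulerLeadingTerm t := by
        rw [← h, eulerLeadingTerm]
        ring

end Inversion

section Asymptotics

open Real (exp)
open scoped Real

lemma eulerLeadingTerm_pos {t : ℝ} (ht : 0 < t) : 0 < eulerLeadingTerm t := by
  unfold eulerLeadingTerm
  positivity

lemma eulerLeadingTerm_div {s t : ℝ} (hs : 0 < s) (ht : 0 < t) :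
    eulerLeadingTerm (t / s) = √s * exp (-(π ^ 2 / (6 * t))) ^ (s - 1) * eulerLeadingTerm t := by
  have hsqrt : √(2 * π / (t / s)) = √s * √(2 * π / t) := by
    rw [← Real.sqrt_mul hs.le, div_div_eq_mul_div, mul_comm _ s, mul_div_assoc]
  have hexp : exp (-(π ^ 2 / (6 * (t / s)))) =
      exp (-(π ^ 2 / (6 * t))) ^ (s - 1) * exp (-(π ^ 2 / (6 * t))) := by
    rw [← Real.exp_mul, ← Real.exp_add]
    congr 1
    field_simp
    ring
  rw [eulerLeadingTerm, eulerLeadingTerm, hsqrt, hexp]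
  ring

lemma eulerFunction_exp_neg_isEquivalent :
    (fun t : ℝ => eulerFunction (exp (-t))) ~[𝓝[>] 0] eulerLeadingTerm := by
  have hexp : Tendsto (fun t : ℝ => exp (t / 24)) (𝓝[>] 0) (𝓝 1) := by
    have hcont : Continuous fun t : ℝ => exp (t / 24) := by fun_prop
    simpa using (hcont.tendsto 0).mono_left nhdsWithin_le_nhds
  have hdual : Tendsto (fun t : ℝ => exp (-(4 * π ^ 2 / t))) (𝓝[>] 0) (𝓝[≥] 0) := by
    refine tendsto_nhdsWithin_iff.2 ⟨?_, .of_forall fun t => (Real.exp_pos _).le⟩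
    exact Real.tendsto_exp_neg_atTop_nhds_zero.comp
      (tendsto_inv_nhdsGT_zero.const_mul_atTop (by positivity))
  refine isEquivalent_iff_exists_eq_mul.2
    ⟨_, by simpa using hexp.mul (tendsto_eulerFunction_nhdsGE_zero.comp hdual), ?_⟩
  filter_upwards [self_mem_nhdsWithin] with t ht using eulerFunction_exp_neg_inversion ht

lemma eulerFunction_exp_neg_mul_isEquivalent {c : ℝ} (hc : 0 < c) :
    (fun t : ℝ => eulerFunction (exp (-(c * t))))
      ~[𝓝[>] 0] fun t => eulerLeadingTerm (c * t) := by
  have hscale : Tendsto (c * ·) (𝓝[>] 0) (𝓝[>] 0) :=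
    tendsto_iff_comap.2 (comap_mulLeft_nhdsGT_zero hc).ge
  exact eulerFunction_exp_neg_isEquivalent.comp_tendsto hscale

lemma qPochR_exp_neg_sq_isEquivalent :
    (fun t : ℝ => qPochR (exp (-t)) (exp (-t) ^ 2))
      ~[𝓝[>] 0] fun t => √2 * exp (-(π ^ 2 / (12 * t))) := by
  refine ((eulerFunction_exp_neg_isEquivalent.div
    (eulerFunction_exp_neg_mul_isEquivalent two_pos)).congr_left ?_).congr_right ?_
  · filter_upwards [self_mem_nhdsWithin] with t (ht : 0 < t)
    have hlt : |exp (-t)| < 1 := by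
      rw [Real.abs_exp]
      exact Real.exp_lt_one_iff.2 (neg_lt_zero.2 ht)
    rw [qPochR_sq_eq_eulerFunction_div hlt, ← Real.exp_nat_mul, Nat.cast_ofNat, mul_neg]
    rfl
  · filter_upwards [self_mem_nhdsWithin] with t (ht : 0 < t)
    have hhalf := eulerLeadingTerm_div two_pos (mul_pos two_pos ht)
    rw [mul_div_cancel_left₀ t two_ne_zero, show (2 : ℝ) - 1 = 1 by norm_num, Real.rpow_one,
      ← mul_assoc, show (6 : ℝ) * 2 = 12 by norm_num] at hhalf
    rw [Pi.div_apply, hhalf, mul_div_cancel_right₀ _ (eulerLeadingTerm_pos (by positivity)).ne']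

lemma leadingTerm_quotient_eq {s t : ℝ} (hs : 0 < s) (ht : 0 < t) :
    (√2 * exp (-(π ^ 2 / (12 * t)))) ^ (s - 1) * eulerLeadingTerm (2 * t) /
      eulerLeadingTerm (2 / s * t) = 2 ^ ((s - 1) / 2) / √s := by
  have htwo : √2 ^ (s - 1) = (2 : ℝ) ^ ((s - 1) / 2) := by
    rw [Real.sqrt_eq_rpow, ← Real.rpow_mul zero_le_two, one_div_mul_eq_div]
  have hlead : 0 < eulerLeadingTerm (2 * t) := eulerLeadingTerm_pos (by positivity)
  rw [div_mul_eq_mul_div, eulerLeadingTerm_div hs (by positivity), ← mul_assoc 6 2 t,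
    show (6 : ℝ) * 2 = 12 by norm_num, Real.mul_rpow (Real.sqrt_nonneg 2) (Real.exp_pos _).le, htwo]
  field_simp

lemma tendsto_neg_log_nhdsWithin_one :
    Tendsto (fun q => -Real.log q) (𝓝[Ioo 0 1] 1) (𝓝[>] 0) := by
  refine tendsto_nhdsWithin_iff.2 ⟨?_, ?_⟩
  · have h := (Real.continuousAt_log one_ne_zero).tendsto.neg
    rw [Real.log_one, neg_zero] at h
    exact h.mono_left nhdsWithin_le_nhds
  · filter_upwards [self_mem_nhdsWithin] with q hq using neg_pos.2 (Real.log_neg hq.1 hq.2)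

end Asymptotics

theorem key_limit_general {s : ℝ} (hs : 0 < s) :
    Tendsto
      (fun q : ℝ => qPochR q (q ^ 2) ^ (s - 1) * qPochR (q ^ 2) (q ^ 2) /
        qPochR (q ^ (2 / s)) (q ^ (2 / s)))
      (𝓝[Ioo 0 1] 1) (𝓝 (2 ^ ((s - 1) / 2) / √s)) := by
  have hodd := qPochR_exp_neg_sq_isEquivalent.rpow (r := s - 1) fun t => by positivity
  have htwo := eulerFunction_exp_neg_mul_isEquivalent two_pos
  have hroot := eulerFunction_exp_neg_mul_isEquivalent (div_pos two_pos hs)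
  have hlim := (((hodd.mul htwo).div hroot).congr_right (by
    filter_upwards [self_mem_nhdsWithin] with t ht
      using leadingTerm_quotient_eq hs ht)).tendsto_const
  refine (hlim.comp tendsto_neg_log_nhdsWithin_one).congr' ?_
  filter_upwards [self_mem_nhdsWithin] with q hq
  have hexp (a : ℝ) : Real.exp (-(a * -Real.log q)) = q ^ a := by
    rw [Real.rpow_def_of_pos hq.1, mul_neg, neg_neg, mul_comm]
  simp only [Function.comp_apply, Pi.div_apply, Pi.mul_apply, Pi.pow_apply, hexp, neg_neg,
    Real.exp_log hq.1, Real.rpow_two, eulerFunction]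

theorem key_limit (n : ℕ) (hn : 0 < n) :
    Filter.Tendsto
      (fun q : ℝ =>
        (qPochR q (q ^ 2)) ^ (n - 1) * qPochR (q ^ 2) (q ^ 2) /
          qPochR (q ^ ((2 : ℝ) / n)) (q ^ ((2 : ℝ) / n)))
      (nhdsWithin 1 (Set.Ioo 0 1))
      (nhds ((2 : ℝ) ^ (((n : ℝ) - 1) / 2) / Real.sqrt n)) := by
  simpa only [← Nat.cast_pred hn, Real.rpow_natCast] using
    key_limit_general (Nat.cast_pos.2 hn : (0 : ℝ) < n)
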